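/- arXiv:2511.03095 — 3 statements merged into one kernel-verified Lean document; each statement's English description precedes it below -/
import Mathlib

section
/- Radial influence of points on kernel locations: for the SparKer model f and any fixed data point x ∈ ℝ^d, the gradient of f(x) with respect to the i-th kernel location μ_i (i.e., the gradient at m = μ_i of the map m ↦ f(x) computed with μ_i replaced by m, all other parameters fixed) equals A_i(x) • (x − μ_i), where A_i(x) = (1/σ²) · (2 a_i k_{μ_i}^σ(x) − f(x)) · p_i(x). -/
open Real Finset

/-- Gaussian kernel with location `μ` and width `σ`. -/
noncomputable def gaussKernel {d : ℕ} (σ : ℝ) (μ x : EuclideanSpace ℝ (Fin d)) : ℝ :=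
  Real.exp (-‖x - μ‖ ^ 2 / (2 * σ ^ 2))

/-- SoftMax activation of the `i`-th kernel in the SparKer ensemble. -/
noncomputable def softmaxAct {d M : ℕ} (σ : ℝ) (μ : Fin M → EuclideanSpace ℝ (Fin d))
    (i : Fin M) (x : EuclideanSpace ℝ (Fin d)) : ℝ :=
  gaussKernel σ (μ i) x / ∑ j, gaussKernel σ (μ j) x

/-- The SparKer model: sparse ensemble of Gaussian kernels with SoftMax competition. -/
noncomputable def sparker {d M : ℕ} (σ : ℝ) (μ : Fin M → EuclideanSpace ℝ (Fin d))
    (a : Fin M → ℝ) (x : EuclideanSpace ℝ (Fin d)) : ℝ :=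
  ∑ i, a i * (softmaxAct σ μ i x * gaussKernel σ (μ i) x)

/-!
The model value is a quotient `f(x) = N / S` with `N = ∑ j, a j * k j ^ 2` and
`S = ∑ j, k j`, where `k j = gaussKernel σ (μ j) x`. In each of them only the `i`-th term varies,
so by the quotient rule `∇f = ((2 * a i * k i - f) / S) • ∇(k i)` for any differentiable kernel.
The Gaussian enters through `∇(k i) = (k i / σ ^ 2) • (x - μ i)`, and `k i / S` is the SoftMax
activation.
-/

section Gradient

variable {F : Type*} [NormedAddCommGroup F] [InnerProductSpace ℝ F] [CompleteSpace F]

theorem hasGradientAt_comp_of_hasDerivAt {φ : ℝ → ℝ} {φ' : ℝ} {f : F → ℝ} {f' x : F}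
    (hφ : HasDerivAt φ φ' (f x)) (hf : HasGradientAt f f' x) :
    HasGradientAt (fun y => φ (f y)) (φ' • f') x := by
  rw [hasGradientAt_iff_hasFDerivAt, map_smul]
  exact hφ.comp_hasFDerivAt x hf.hasFDerivAt

theorem hasGradientAt_div {f g : F → ℝ} {f' g' x : F}
    (hf : HasGradientAt f f' x) (hg : HasGradientAt g g' x) (hgx : g x ≠ 0) :
    HasGradientAt (fun y => f y / g y) ((g x)⁻¹ • (f' - (f x / g x) • g')) x := by
  have hinv : HasGradientAt (fun y => (g y)⁻¹) ((-(g x ^ 2)⁻¹) • g') x :=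
    hasGradientAt_comp_of_hasDerivAt (hasDerivAt_inv hgx) hg
  have hmul := hf.hasFDerivAt.mul hinv.hasFDerivAt
  simp only [div_eq_mul_inv]
  refine hasGradientAt_iff_hasFDerivAt.2 (hmul.congr_fderiv ?_)
  simp only [map_smul, map_sub]
  module

theorem hasGradientAt_norm_sub_sq (x m : F) :
    HasGradientAt (fun m => ‖x - m‖ ^ 2) ((2 : ℝ) • (m - x)) m := by
  have hsub : HasFDerivAt (fun m => x - m) (-ContinuousLinearMap.id ℝ F) m :=
    (hasFDerivAt_id m).const_sub x
  refine hasGradientAt_iff_hasFDerivAt.2 (hsub.norm_sq.congr_fderiv ?_)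
  ext v
  simp

variable {ι : Type*} [Fintype ι] [DecidableEq ι]

theorem hasGradientAt_sum_update {φ : ι → F → ℝ} {μ : ι → F} {i : ι} {g : F}
    (hφ : HasGradientAt (φ i) g (μ i)) :
    HasGradientAt (fun m => ∑ j, φ j (Function.update μ i m j)) g (μ i) := by
  simp only [Function.apply_update φ, sum_update_of_mem (mem_univ i)]
  exact hasGradientAt_iff_hasFDerivAt.2 (hφ.hasFDerivAt.add_const _)

theorem hasGradientAt_sum_sq_div_sum_update (a : ι → ℝ) {κ : F → ℝ} {μ : ι → F} {i : ι} {g : F}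
    (hκ : HasGradientAt κ g (μ i)) (hsum : ∑ j, κ (μ j) ≠ 0) :
    HasGradientAt
      (fun m => (∑ j, a j * κ (Function.update μ i m j) ^ 2) / ∑ j, κ (Function.update μ i m j))
      (((2 * a i * κ (μ i) - (∑ j, a j * κ (μ j) ^ 2) / ∑ j, κ (μ j)) / ∑ j, κ (μ j)) • g)
      (μ i) := by
  have hsq : HasDerivAt (fun t : ℝ => a i * t ^ 2) (2 * a i * κ (μ i)) (κ (μ i)) := by
    refine ((hasDerivAt_pow 2 (κ (μ i))).const_mul (a i)).congr_deriv ?_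
    ring
  have hnum : HasGradientAt (fun m => ∑ j, a j * κ (Function.update μ i m j) ^ 2)
      ((2 * a i * κ (μ i)) • g) (μ i) :=
    hasGradientAt_sum_update (φ := fun j m => a j * κ m ^ 2)
      (hasGradientAt_comp_of_hasDerivAt (f := κ) hsq hκ)
  have hden : HasGradientAt (fun m => ∑ j, κ (Function.update μ i m j)) g (μ i) :=
    hasGradientAt_sum_update (φ := fun _ => κ) hκ
  have hdiv := hasGradientAt_div hnum hden (by rwa [Function.update_eq_self])
  rw [Function.update_eq_self, ← sub_smul, smul_smul, inv_mul_eq_div] at hdiv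
  exact hdiv

end Gradient

section SparKer

variable {d M : ℕ} (σ : ℝ)

theorem gaussKernel_pos (m x : EuclideanSpace ℝ (Fin d)) : 0 < gaussKernel σ m x :=
  exp_pos _

theorem hasGradientAt_gaussKernel_location (m x : EuclideanSpace ℝ (Fin d)) :
    HasGradientAt (fun m => gaussKernel σ m x) ((gaussKernel σ m x / σ ^ 2) • (x - m)) m := by
  have hexp : HasDerivAt (fun t : ℝ => exp (-t / (2 * σ ^ 2)))
      (gaussKernel σ m x * (-1 / (2 * σ ^ 2))) (‖x - m‖ ^ 2) :=
    ((hasDerivAt_neg _).div_const _).exp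
  have hgrad : HasGradientAt (fun m => gaussKernel σ m x)
      ((gaussKernel σ m x * (-1 / (2 * σ ^ 2))) • (2 : ℝ) • (m - x)) m :=
    hasGradientAt_comp_of_hasDerivAt (f := fun m => ‖x - m‖ ^ 2) hexp
      (hasGradientAt_norm_sub_sq x m)
  convert hgrad using 1
  module

theorem sparker_eq_sum_sq_div_sum (μ : Fin M → EuclideanSpace ℝ (Fin d)) (a : Fin M → ℝ)
    (x : EuclideanSpace ℝ (Fin d)) :
    sparker σ μ a x =
      (∑ j, a j * gaussKernel σ (μ j) x ^ 2) / ∑ j, gaussKernel σ (μ j) x := by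
  simp only [sparker, softmaxAct, sum_div]
  exact sum_congr rfl fun j _ => by ring

end SparKer

/-- radial influence of points on kernel locations.  The gradient of the SparKer
model value `f(x)` with respect to the `i`-th kernel location `μ i` equals
`A_i(x) • (x − μ_i)` with `A_i(x) = (1/σ²)(2 a_i k_{μ_i}^σ(x) − f(x)) p_i(x)`. -/
theorem sparker_gradient_location (d M : ℕ) (hd : 1 ≤ d)
    (σ : ℝ) (hσ : 0 < σ) (μ : Fin M → EuclideanSpace ℝ (Fin d)) (a : Fin M → ℝ)
    (i : Fin M) (x : EuclideanSpace ℝ (Fin d)) :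
    gradient (fun m : EuclideanSpace ℝ (Fin d) =>
        sparker σ (Function.update μ i m) a x) (μ i) =
      ((1 / σ ^ 2) * (2 * a i * gaussKernel σ (μ i) x - sparker σ μ a x) *
        softmaxAct σ μ i x) • (x - μ i) := by
  have hsum : 0 < ∑ j, gaussKernel σ (μ j) x :=
    sum_pos (fun j _ => gaussKernel_pos σ (μ j) x) ⟨i, mem_univ i⟩
  have hgrad := hasGradientAt_sum_sq_div_sum_update a
    (hasGradientAt_gaussKernel_location σ (μ i) x) hsum.ne'
  simp only [← sparker_eq_sum_sq_div_sum] at hgrad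
  rw [hgrad.gradient, smul_smul, softmaxAct]
  congr 1
  ring
end

section
/- Bound on the model outside all spheres of influence: let α ∈ (0,1) and let x ∈ ℝ^d be such that k_{μ_j}^σ(x) ≤ α for every j = 1,…,M. Then the SparKer model satisfies −α Σ_{j : a_j < 0} |a_j| ≤ f(x) ≤ α Σ_{j : a_j > 0} |a_j|. -/
open Real Finset

/-!
SoftMax activations lie in `[0, 1]`, so outside the spheres of influence every amplitude is
multiplied by a factor in `[0, α]`. Discarding the terms of nonpositive amplitude gives the upper
bound, and the lower bound is the upper bound for the negated amplitudes.
-/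

section WeightedSum

variable {ι R : Type*} [CommRing R] [LinearOrder R] [IsOrderedRing R]
  {s : Finset ι} {a w p k : ι → R} {c : R}

lemma sum_mul_le_sum_filter_pos_mul (hw : ∀ i ∈ s, 0 ≤ w i) :
    ∑ i ∈ s, a i * w i ≤ ∑ i ∈ s with 0 < a i, a i * w i := by
  rw [← sum_filter_add_sum_filter_not s (0 < a ·) fun i => a i * w i]
  refine add_le_of_nonpos_right (sum_nonpos fun i hi => ?_)
  obtain ⟨his, hai⟩ := mem_filter.mp hi
  exact mul_nonpos_of_nonpos_of_nonneg (not_lt.mp hai) (hw i his)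

lemma sum_mul_le_mul_sum_filter_pos_abs (hw : ∀ i ∈ s, 0 ≤ w i) (hwc : ∀ i ∈ s, w i ≤ c) :
    ∑ i ∈ s, a i * w i ≤ c * ∑ i ∈ s with 0 < a i, |a i| :=
  calc ∑ i ∈ s, a i * w i
      ≤ ∑ i ∈ s with 0 < a i, a i * w i := sum_mul_le_sum_filter_pos_mul hw
    _ ≤ ∑ i ∈ s with 0 < a i, |a i| * c := by
        refine sum_le_sum fun i hi => ?_
        have his : i ∈ s := mem_of_mem_filter i hi
        exact mul_le_mul (le_abs_self _) (hwc i his) (hw i his) (abs_nonneg _)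
    _ = c * ∑ i ∈ s with 0 < a i, |a i| := by rw [← sum_mul, mul_comm]

lemma neg_mul_sum_filter_neg_abs_le_sum_mul (hw : ∀ i ∈ s, 0 ≤ w i) (hwc : ∀ i ∈ s, w i ≤ c) :
    -(c * ∑ i ∈ s with a i < 0, |a i|) ≤ ∑ i ∈ s, a i * w i := by
  have upper_bound_neg := sum_mul_le_mul_sum_filter_pos_abs (a := -a) hw hwc
  simp only [Pi.neg_apply, neg_mul, sum_neg_distrib, abs_neg, Left.neg_pos_iff]
    at upper_bound_neg
  exact neg_le.mp upper_bound_neg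

theorem sparker_bound_outside_spheres_general (hp₀ : ∀ i ∈ s, 0 ≤ p i) (hp₁ : ∀ i ∈ s, p i ≤ 1)
    (hk₀ : ∀ i ∈ s, 0 ≤ k i) (hkc : ∀ i ∈ s, k i ≤ c) :
    -(c * ∑ i ∈ s with a i < 0, |a i|) ≤ ∑ i ∈ s, a i * (p i * k i) ∧
      ∑ i ∈ s, a i * (p i * k i) ≤ c * ∑ i ∈ s with 0 < a i, |a i| := by
  have weight_nonneg : ∀ i ∈ s, 0 ≤ p i * k i := fun i hi => mul_nonneg (hp₀ i hi) (hk₀ i hi)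
  have weight_le : ∀ i ∈ s, p i * k i ≤ c := fun i hi =>
    (mul_le_of_le_one_left (hk₀ i hi) (hp₁ i hi)).trans (hkc i hi)
  exact ⟨neg_mul_sum_filter_neg_abs_le_sum_mul weight_nonneg weight_le,
    sum_mul_le_mul_sum_filter_pos_abs weight_nonneg weight_le⟩

end WeightedSum

section Softmax

variable {d M : ℕ} (σ : ℝ)

lemma gaussKernel_nonneg (μ x : EuclideanSpace ℝ (Fin d)) : 0 ≤ gaussKernel σ μ x :=
  exp_nonneg _

variable (μ : Fin M → EuclideanSpace ℝ (Fin d)) (i : Fin M) (x : EuclideanSpace ℝ (Fin d))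

lemma softmaxAct_nonneg : 0 ≤ softmaxAct σ μ i x :=
  div_nonneg (gaussKernel_nonneg σ _ x) (sum_nonneg fun j _ => gaussKernel_nonneg σ (μ j) x)

lemma softmaxAct_le_one : softmaxAct σ μ i x ≤ 1 := by
  have kernel_nonneg : ∀ j ∈ univ, 0 ≤ gaussKernel σ (μ j) x := fun j _ =>
    gaussKernel_nonneg σ (μ j) x
  exact div_le_one_of_le₀ (single_le_sum kernel_nonneg (mem_univ i)) (sum_nonneg kernel_nonneg)

end Softmax

/-- bound on the model outside all spheres of influence.  If
`k_{μ_j}^σ(x) ≤ α` for all `j`, then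
`−α Σ_{j : a_j < 0} |a_j| ≤ f(x) ≤ α Σ_{j : a_j > 0} |a_j|`. -/
theorem sparker_bound_outside_spheres (d M : ℕ) (hd : 1 ≤ d)
    (σ : ℝ) (hσ : 0 < σ) (μ : Fin M → EuclideanSpace ℝ (Fin d)) (a : Fin M → ℝ)
    (x : EuclideanSpace ℝ (Fin d)) (α : ℝ) (hα : α ∈ Set.Ioo (0 : ℝ) 1)
    (hx : ∀ j, gaussKernel σ (μ j) x ≤ α) :
    -(α * ∑ j ∈ Finset.univ.filter (fun j => a j < 0), |a j|) ≤ sparker σ μ a x ∧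
    sparker σ μ a x ≤ α * ∑ j ∈ Finset.univ.filter (fun j => 0 < a j), |a j| :=
  sparker_bound_outside_spheres_general (fun i _ => softmaxAct_nonneg σ μ i x)
    (fun i _ => softmaxAct_le_one σ μ i x) (fun i _ => gaussKernel_nonneg σ (μ i) x)
    (fun i _ => hx i)
end

section
/- Geometric contraction of the single-kernel convergence recursion: let σ > 0, 0 < η ≤ σ², δ_0 ≥ 0, and define δ_{t+1} = δ_t − (η δ_t/σ²)·exp(−δ_t²/(2σ²)) for t ≥ 0. Then for all t: (i) 0 ≤ δ_{t+1} ≤ δ_t (the sequence is nonnegative and nonincreasing), and (ii) δ_t ≤ δ_0 ρ^t where ρ = 1 − (η/σ²)·exp(−δ_0²/(2σ²)) ∈ [0,1). -/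
open Real

/-!
The recursion is multiplicative, `δ (t + 1) = δ t * f (δ t)`, where the factor
`f x = 1 - (η / σ ^ 2) * exp (-x ^ 2 / (2 * σ ^ 2))` lies in `[0, 1)`. Hence `δ` stays nonnegative
and decreases. Since `f` increases with the distance, every factor along the orbit is at most the
initial one, `ρ = f (δ 0)`.
-/

section MultiplicativeRecursion

variable {R : Type*} [Semiring R] [PartialOrder R] [IsOrderedRing R] {f : R → R} {u : ℕ → R}

theorem nonneg_of_succ_eq_mul (hf : ∀ x, 0 ≤ x → 0 ≤ f x) (hu : ∀ n, u (n + 1) = u n * f (u n))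
    (hu0 : 0 ≤ u 0) (n : ℕ) : 0 ≤ u n := by
  induction n with
  | zero => exact hu0
  | succ n ih =>
    rw [hu]
    exact mul_nonneg ih (hf _ ih)

theorem antitone_of_succ_eq_mul (hf : ∀ x, 0 ≤ x → f x ∈ Set.Icc 0 1)
    (hu : ∀ n, u (n + 1) = u n * f (u n)) (hu0 : 0 ≤ u 0) : Antitone u := by
  refine antitone_nat_of_succ_le fun n ↦ ?_
  have hun : 0 ≤ u n := nonneg_of_succ_eq_mul (fun x hx ↦ (hf x hx).1) hu hu0 n
  rw [hu]
  exact mul_le_of_le_one_right hun (hf _ hun).2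

theorem le_mul_pow_of_succ_eq_mul (hf : ∀ x, 0 ≤ x → f x ∈ Set.Icc 0 1)
    (hf_mono : MonotoneOn f (Set.Ici 0)) (hu : ∀ n, u (n + 1) = u n * f (u n)) (hu0 : 0 ≤ u 0)
    (n : ℕ) : u n ≤ u 0 * f (u 0) ^ n := by
  induction n with
  | zero => simp
  | succ n ih =>
    have hun : 0 ≤ u n := nonneg_of_succ_eq_mul (fun x hx ↦ (hf x hx).1) hu hu0 n
    have hun_le : u n ≤ u 0 := antitone_of_succ_eq_mul hf hu hu0 n.zero_le
    calc u (n + 1) = u n * f (u n) := hu n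
      _ ≤ u n * f (u 0) := mul_le_mul_of_nonneg_left (hf_mono hun hu0 hun_le) hun
      _ ≤ u 0 * f (u 0) ^ n * f (u 0) := mul_le_mul_of_nonneg_right ih (hf _ hu0).1
      _ = u 0 * f (u 0) ^ (n + 1) := by rw [pow_succ, mul_assoc]

end MultiplicativeRecursion

/-- The factor by which one gradient step with learning rate `η` scales the distance `x` between a
Gaussian kernel of width `σ` and its data point. -/
noncomputable def gaussianStepFactor (σ η x : ℝ) : ℝ :=
  1 - (η / σ ^ 2) * exp (-x ^ 2 / (2 * σ ^ 2))

namespace gaussianStepFactor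

variable {σ η : ℝ}

protected theorem nonneg (hησ : η ≤ σ ^ 2) (x : ℝ) : 0 ≤ gaussianStepFactor σ η x := by
  have hrate : η / σ ^ 2 ≤ 1 := div_le_one_of_le₀ hησ (sq_nonneg σ)
  have hexp : exp (-x ^ 2 / (2 * σ ^ 2)) ≤ 1 :=
    exp_le_one_iff.2 (div_nonpos_of_nonpos_of_nonneg (neg_nonpos.2 (sq_nonneg x)) (by positivity))
  exact sub_nonneg.2 (mul_le_one₀ hrate (exp_nonneg _) hexp)

protected theorem lt_one (hσ : σ ≠ 0) (hη : 0 < η) (x : ℝ) : gaussianStepFactor σ η x < 1 :=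
  sub_lt_self 1 (by positivity)

protected theorem monotoneOn (σ : ℝ) (hη : 0 ≤ η) :
    MonotoneOn (gaussianStepFactor σ η) (Set.Ici 0) := by
  intro x (hx : 0 ≤ x) y _ hxy
  unfold gaussianStepFactor
  gcongr

end gaussianStepFactor

/-- geometric contraction of the single-kernel convergence recursion.  Let
`σ > 0`, `0 < η ≤ σ²`, `δ_0 ≥ 0`, and `δ_{t+1} = δ_t − (η δ_t/σ²)·exp(−δ_t²/(2σ²))`.  Then the
sequence is nonnegative and nonincreasing, `ρ = 1 − (η/σ²)·exp(−δ_0²/(2σ²)) ∈ [0,1)`, and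
`δ_t ≤ δ_0 ρ^t` for all `t`. -/
theorem single_kernel_geometric_contraction (σ η : ℝ) (hσ : 0 < σ) (hη : 0 < η)
    (hησ : η ≤ σ ^ 2) (δ : ℕ → ℝ) (hδ0 : 0 ≤ δ 0)
    (hrec : ∀ t : ℕ,
      δ (t + 1) = δ t - (η * δ t / σ ^ 2) * Real.exp (-(δ t) ^ 2 / (2 * σ ^ 2))) :
    (∀ t : ℕ, 0 ≤ δ (t + 1) ∧ δ (t + 1) ≤ δ t) ∧
    (1 - (η / σ ^ 2) * Real.exp (-(δ 0) ^ 2 / (2 * σ ^ 2)) ∈ Set.Ico (0 : ℝ) 1) ∧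
    (∀ t : ℕ,
      δ t ≤ δ 0 * (1 - (η / σ ^ 2) * Real.exp (-(δ 0) ^ 2 / (2 * σ ^ 2))) ^ t) := by
  have hfactor (x : ℝ) : gaussianStepFactor σ η x ∈ Set.Ico 0 1 :=
    ⟨gaussianStepFactor.nonneg hησ x, gaussianStepFactor.lt_one hσ.ne' hη x⟩
  have hunit (x : ℝ) (_ : 0 ≤ x) : gaussianStepFactor σ η x ∈ Set.Icc 0 1 :=
    Set.Ico_subset_Icc_self (hfactor x)
  have hmul (t : ℕ) : δ (t + 1) = δ t * gaussianStepFactor σ η (δ t) := by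
    rw [hrec, gaussianStepFactor]
    ring
  exact ⟨fun t ↦ ⟨nonneg_of_succ_eq_mul (fun x hx ↦ (hunit x hx).1) hmul hδ0 (t + 1),
      antitone_of_succ_eq_mul hunit hmul hδ0 t.le_succ⟩,
    hfactor (δ 0),
    le_mul_pow_of_succ_eq_mul hunit (gaussianStepFactor.monotoneOn σ hη.le) hmul hδ0⟩
end
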